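/- Let S be a subset of the chambers of a hyperplane arrangement 𝓗 in general position in ℝ^d. Then there exists an injective map μ : S → ⊔_{A∈supp(S)} conn(T_S(A)) such that for every A ∈ supp(S) at least one connected component of T_S(A) lies in the image of μ. Consequently, |supp(S)| ≤ |S| ≤ Σ_{A∈supp(S)} |conn(T_S(A))|. -/

import Mathlib

open Set Topology

noncomputable section

/-- A hyperplane arrangement of `n` affine hyperplanes in `ℝ^d`, given by
nonzero normal vectors and offsets: the `i`-th hyperplane is
`{x | ∑ j, normal i j * x j = offset i}`. -/
structure Arrangement (d n : ℕ) where
  normal : Fin n → (Fin d → ℝ)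
  offset : Fin n → ℝ
  normal_ne : ∀ i, normal i ≠ 0

/-- The thickening (regular open hull) `T_S` of a set `S` of chambers. -/
def thickening {d : ℕ} (S : Set (Set (Fin d → ℝ))) : Set (Fin d → ℝ) :=
  interior (closure (⋃ C ∈ S, C))

/-- The set of connected components of a subset `X` of a topological space. -/
def connComps {α : Type*} [TopologicalSpace α] (X : Set α) : Set (Set α) :=
  {c | ∃ x ∈ X, c = connectedComponentIn X x}

namespace Arrangement

variable {d n : ℕ} (𝓗 : Arrangement d n)

/-- The `i`-th hyperplane of the arrangement. -/
def H (i : Fin n) : Set (Fin d → ℝ) := {x | ∑ j, 𝓗.normal i j * x j = 𝓗.offset i}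

/-- The positive open half-space determined by the `i`-th hyperplane. -/
def pos (i : Fin n) : Set (Fin d → ℝ) := {x | 𝓗.offset i < ∑ j, 𝓗.normal i j * x j}

/-- The negative open half-space determined by the `i`-th hyperplane. -/
def neg (i : Fin n) : Set (Fin d → ℝ) := {x | ∑ j, 𝓗.normal i j * x j < 𝓗.offset i}

/-- The complement of the union of the hyperplanes. -/
def free : Set (Fin d → ℝ) := {x | ∀ i, x ∉ 𝓗.H i}

/-- The chambers: connected components of the complement of the hyperplanes. -/
def chambers : Set (Set (Fin d → ℝ)) :=
  {C | ∃ x ∈ 𝓗.free, C = connectedComponentIn 𝓗.free x}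

/-- General position: the normals of any `≤ d` hyperplanes are linearly independent
(so that their intersection is an affine subspace of the right dimension), and no
`d+1` hyperplanes have a common point. -/
def GeneralPosition : Prop :=
  (∀ A : Finset (Fin n), A.card ≤ d →
      LinearIndependent ℝ (fun i : A => 𝓗.normal i.1)) ∧
  (∀ A : Finset (Fin n), A.card = d + 1 → (⋂ i ∈ A, 𝓗.H i) = ∅)

/-- Hyperplane `e` separates `C` from `C'`. -/
def Separates (e : Fin n) (C C' : Set (Fin d → ℝ)) : Prop :=
  (C ⊆ 𝓗.pos e ∧ C' ⊆ 𝓗.neg e) ∨ (C ⊆ 𝓗.neg e ∧ C' ⊆ 𝓗.pos e)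

/-- Adjacency in the chamber graph: two chambers are adjacent iff they are separated
by exactly one hyperplane (equivalently, share a common facet). -/
def Adj (C C' : Set (Fin d → ℝ)) : Prop :=
  C ∈ 𝓗.chambers ∧ C' ∈ 𝓗.chambers ∧ ∃! e : Fin n, 𝓗.Separates e C C'

/-- The edge boundary of a set `S` of chambers, encoded as the set of ordered pairs
`(C, C')` of adjacent chambers with `C ∈ S` and `C' ∉ S` (each boundary edge is thus
counted exactly once). -/
def edgeBoundary (S : Set (Set (Fin d → ℝ))) :
    Set ((Set (Fin d → ℝ)) × (Set (Fin d → ℝ))) :=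
  {q | q.1 ∈ S ∧ q.2 ∉ S ∧ 𝓗.Adj q.1 q.2}

/-- The stratum `T_S(A) = T_S ∩ L_A`. -/
def stratum (S : Set (Set (Fin d → ℝ))) (A : Finset (Fin n)) : Set (Fin d → ℝ) :=
  thickening S ∩ ⋂ i ∈ A, 𝓗.H i

/-- The support of `S`: those `A` with nonempty stratum. -/
def supp (S : Set (Set (Fin d → ℝ))) : Set (Finset (Fin n)) :=
  {A | (𝓗.stratum S A).Nonempty}

/-- `H_f` bounds the stratum `T_S(A)`: the stratum lies entirely in one of the open
half-spaces of `H_f`, and `H_f` meets the closure of the stratum within `L_A`. -/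
def Bounds (f : Fin n) (S : Set (Set (Fin d → ℝ))) (A : Finset (Fin n)) : Prop :=
  (𝓗.stratum S A ⊆ 𝓗.pos f ∨ 𝓗.stratum S A ⊆ 𝓗.neg f) ∧
  (𝓗.H f ∩ closure (𝓗.stratum S A) ∩ ⋂ i ∈ A, 𝓗.H i).Nonempty

/-- `S` is strata-connected if every nonempty stratum is connected. -/
def StrataConnected (S : Set (Set (Fin d → ℝ))) : Prop :=
  ∀ A ∈ 𝓗.supp S, IsConnected (𝓗.stratum S A)

end Arrangement

/-- The generalized binomial coefficient `C(x, i) = x(x-1)⋯(x-i+1)/i!`. -/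
noncomputable def gchoose (x : ℝ) (i : ℕ) : ℝ :=
  (∏ j ∈ Finset.range i, (x - j)) / (Nat.factorial i)

/-!
Let `c X` be the number of connected components of `X`. Cutting an open set, or its trace `X` on a
flat, along one hyperplane `H` gives `c (X \ H) ≤ c X + c (X ∩ H)`: each component of `X ∩ H`
touches one component of `X \ H` on either side, and a labelling of the components of `X \ H` that
agrees across `X ∩ H` is locally constant on `X`. Cutting along all hyperplanes in turn bounds `|S|`
by `∑ A, c (T_S ∩ L_A)`. Conversely, by general position, if a flat meets `U ∩ H` for an open set
`U`, it meets `U` on both sides of `H`; so `U` meets at most as many flats as its two halves do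
together, where only the uncut hyperplanes count in each half, and induction bounds the size of the
support by `|S|`. Given both inequalities, `μ` enumerates a set of `|S|` components that contains
one component of every nonempty stratum.
-/

section Counting

variable {α β κ : Type*}

lemma encard_image_le_encard_image {s : Set α} {f : α → β} {g : α → κ}
    (h : ∀ x ∈ s, ∀ y ∈ s, f x = f y → g x = g y) : (g '' s).encard ≤ (f '' s).encard := by
  obtain ⟨t, hts, ht⟩ := exists_subset_bijOn s g
  have hf : InjOn f t := fun x hx y hy hxy => ht.injOn hx hy (h x (hts hx) y (hts hy) hxy)
  calc (g '' s).encard = t.encard := by rw [← ht.image_eq, ht.injOn.encard_image]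
    _ = (f '' t).encard := hf.encard_image.symm
    _ ≤ (f '' s).encard := encard_le_encard (image_mono hts)

lemma encard_le_encard_image_update_id_add_one [DecidableEq κ] (a b : κ) (V : Set κ) :
    V.encard ≤ (Function.update id a b '' V).encard + 1 := by
  refine (encard_le_encard fun x hx => ?_).trans (encard_insert_le _ a)
  rcases eq_or_ne x a with rfl | hxa
  · exact mem_insert _ _
  · exact mem_insert_of_mem _ ⟨x, hx, by simp [hxa]⟩

/- The vertex count of a finite graph is at most the number of edges plus the number of connected
components, with `f` sending each vertex to a representative of its component. -/
lemma exists_map_identifying_pairs {R : Set (κ × κ)} (hR : R.Finite) :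
    ∃ f : κ → κ, (∀ p ∈ R, f p.1 = f p.2) ∧
      ∀ V : Set κ, V.encard ≤ (f '' V).encard + R.encard := by
  classical
  induction R, hR using Set.Finite.induction_on with
  | empty => exact ⟨id, by simp, by simp⟩
  | @insert p R hp _ ih =>
    obtain ⟨f, hf, hV⟩ := ih
    refine ⟨Function.update id (f p.1) (f p.2) ∘ f, ?_, fun V => ?_⟩
    · rintro q (rfl | hq)
      · simp [Function.update_apply]
      · exact congrArg (Function.update id (f p.1) (f p.2)) (hf q hq)
    · rw [encard_insert_of_notMem hp, add_comm R.encard, ← add_assoc, image_comp]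
      exact (hV V).trans
        (add_le_add_left (encard_le_encard_image_update_id_add_one _ _ _) _)

lemma encard_setOf_snd_mem [Fintype α] (K : α → Set β) :
    {p : α × β | p.2 ∈ K p.1}.encard = ∑ a, (K a).encard := by
  have hunion : {p : α × β | p.2 ∈ K p.1} = ⋃ a, Prod.mk a '' K a := by
    ext ⟨a, b⟩
    simp
  have hdisj : Pairwise fun a a' => Disjoint (Prod.mk a '' K a) (Prod.mk a' '' K a') := by
    intro a a' ha
    rw [disjoint_left]
    rintro _ ⟨b, _, rfl⟩ ⟨b', _, h⟩
    exact ha (congrArg Prod.fst h).symm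
  rw [hunion, encard_iUnion_of_finite hdisj, finsum_eq_sum_of_fintype]
  exact Finset.sum_congr rfl fun a _ => (Prod.mk_right_injective a).encard_image (K a)

lemma exists_injective_forall_nonempty_exists_fst_eq [Fintype α] {s : Set κ} {K : α → Set β}
    (hs : s.Finite) (hlower : {a | (K a).Nonempty}.encard ≤ s.encard)
    (hupper : s.encard ≤ ∑ a, (K a).encard) :
    ∃ μ : s → α × β, Function.Injective μ ∧ (∀ c, (μ c).2 ∈ K (μ c).1) ∧
      ∀ a, (K a).Nonempty → ∃ c, (μ c).1 = a := by
  obtain ⟨P, hPK, hP⟩ := exists_subset_bijOn {p : α × β | p.2 ∈ K p.1} Prod.fst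
  have himage : Prod.fst '' {p : α × β | p.2 ∈ K p.1} = {a | (K a).Nonempty} := by
    ext a
    simp [Set.Nonempty]
  rw [himage] at hP
  have hPs : P.encard ≤ s.encard := by rwa [← hP.injOn.encard_image, hP.image_eq]
  obtain ⟨R, hPR, hRK, hRs⟩ :=
    exists_superset_subset_encard_eq hPK hPs (hupper.trans_eq (encard_setOf_snd_mem K).symm)
  have hR : R.Finite := finite_of_encard_eq_coe (hRs.trans hs.cast_ncard_eq.symm)
  have := hs.to_subtype
  have := hR.to_subtype
  have hcard : s.ncard = R.ncard := (congrArg ENat.toNat hRs).symm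
  obtain ⟨e⟩ : Nonempty (s ≃ R) := Finite.card_eq.1 hcard
  refine ⟨fun c => e c, Subtype.val_injective.comp e.injective, fun c => hRK (e c).2, ?_⟩
  intro a ha
  obtain ⟨p, hp, rfl⟩ := hP.surjOn ha
  exact ⟨e.symm ⟨p, hPR hp⟩, by simp⟩

end Counting

section Topology

variable {E κ : Type*} [TopologicalSpace E] {X Y P N Q K : Set E}

/-- Local constancy of a function on a subset `X`, with respect to the subspace topology of `X`;
the function itself is defined on the whole ambient space. -/
def IsLocallyConstantOn (F : E → κ) (X : Set E) : Prop :=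
  ∀ x ∈ X, ∀ᶠ y in 𝓝[X] x, F y = F x

namespace IsLocallyConstantOn

lemma mono {F : E → κ} (hF : IsLocallyConstantOn F X) (hYX : Y ⊆ X) : IsLocallyConstantOn F Y :=
  fun x hx => nhdsWithin_mono x hYX (hF x (hYX hx))

lemma comp {κ' : Type*} {F : E → κ} (hF : IsLocallyConstantOn F X) (f : κ → κ') :
    IsLocallyConstantOn (f ∘ F) X :=
  fun x hx => (hF x hx).mono fun _ hy => congrArg f hy

lemma prodMk {κ' : Type*} {F : E → κ} {G : E → κ'} (hF : IsLocallyConstantOn F X)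
    (hG : IsLocallyConstantOn G X) : IsLocallyConstantOn (fun x => (F x, G x)) X :=
  fun x hx => ((hF x hx).and (hG x hx)).mono fun _ hy => Prod.ext hy.1 hy.2

lemma eq_of_isPreconnected {F : E → κ} (hF : IsLocallyConstantOn F K) (hK : IsPreconnected K)
    {x y : E} (hx : x ∈ K) (hy : y ∈ K) : F x = F y :=
  hK.induction₂' (fun x y => F x = F y)
    (fun z hz => (hF z hz).mono fun _ h => ⟨h.symm, h⟩)
    (fun _ _ _ _ _ _ => Eq.trans) hx hy

end IsLocallyConstantOn

lemma connComps_eq_image (X : Set E) : connComps X = connectedComponentIn X '' X := by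
  ext c
  simp only [connComps, mem_ofPred_eq, mem_image, eq_comm]

lemma connComps_nonempty_iff : (connComps X).Nonempty ↔ X.Nonempty := by
  rw [connComps_eq_image, image_nonempty]

lemma connectedComponentIn_eq_of_isPreconnected (hK : IsPreconnected K) (hKX : K ⊆ X) {x y : E}
    (hx : x ∈ K) (hy : y ∈ K) : connectedComponentIn X x = connectedComponentIn X y :=
  connectedComponentIn_eq (hK.subset_connectedComponentIn hx hKX hy)

lemma IsLocallyConstantOn.encard_image_le {F : E → κ} (hF : IsLocallyConstantOn F X) :
    (F '' X).encard ≤ (connComps X).encard := by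
  rw [connComps_eq_image]
  refine encard_image_le_encard_image fun x hx y hy hxy => ?_
  exact (hF.mono (connectedComponentIn_subset X x)).eq_of_isPreconnected
    isPreconnected_connectedComponentIn (mem_connectedComponentIn hx)
    (hxy ▸ mem_connectedComponentIn hy)

lemma connectedComponentIn_inter_eq (hP : IsOpen P) (hN : IsOpen N) (hPN : Disjoint P N)
    (hX : X ⊆ P ∪ N) {x : E} (hx : x ∈ X ∩ P) :
    connectedComponentIn (X ∩ P) x = connectedComponentIn X x := by
  have hmem : x ∈ connectedComponentIn X x := mem_connectedComponentIn hx.1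
  have hsub : connectedComponentIn X x ⊆ X := connectedComponentIn_subset X x
  refine (connectedComponentIn_mono x inter_subset_left).antisymm ?_
  refine isPreconnected_connectedComponentIn.subset_connectedComponentIn hmem
    (subset_inter hsub ?_)
  exact isPreconnected_connectedComponentIn.subset_left_of_subset_union hP hN hPN
    (hsub.trans hX) ⟨x, hmem, hx.2⟩

lemma encard_connComps_add_encard_connComps_le (hP : IsOpen P) (hN : IsOpen N)
    (hPN : Disjoint P N) (hX : X ⊆ P ∪ N) :
    (connComps (X ∩ P)).encard + (connComps (X ∩ N)).encard ≤ (connComps X).encard := by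
  have hdisj : Disjoint (connComps (X ∩ P)) (connComps (X ∩ N)) := by
    rw [disjoint_left]
    rintro _ ⟨x, hx, rfl⟩ ⟨y, _, hxy⟩
    have hxN : x ∈ X ∩ N := connectedComponentIn_subset _ y (hxy ▸ mem_connectedComponentIn hx)
    exact disjoint_left.1 hPN hx.2 hxN.2
  rw [← encard_union_eq hdisj]
  refine encard_le_encard (union_subset ?_ ?_)
  · rintro _ ⟨x, hx, rfl⟩
    exact ⟨x, hx.1, connectedComponentIn_inter_eq hP hN hPN hX hx⟩
  · rintro _ ⟨x, hx, rfl⟩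
    exact ⟨x, hx.1, connectedComponentIn_inter_eq hN hP hPN.symm (union_comm P N ▸ hX) hx⟩

lemma exists_eventually_connectedComponentIn_eq (hQX : Q ⊆ X) {x : E}
    (hx : ∃ U ∈ 𝓝 x, IsPreconnected (Q ∩ U)) :
    ∃ c, ∀ᶠ y in 𝓝[Q] x, connectedComponentIn X y = c := by
  obtain ⟨U, hU, hQU⟩ := hx
  have hmem : Q ∩ U ∈ 𝓝[Q] x := inter_mem_nhdsWithin Q hU
  rcases (Q ∩ U).eq_empty_or_nonempty with hempty | ⟨z, hz⟩
  · exact ⟨∅, by filter_upwards [hmem] with y hy using absurd hy (hempty ▸ notMem_empty y)⟩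
  · refine ⟨connectedComponentIn X z, ?_⟩
    filter_upwards [hmem] with y hy
    exact connectedComponentIn_eq_of_isPreconnected hQU (inter_subset_left.trans hQX) hy hz

lemma isLocallyConstantOn_of_eventually_eq {F G : E → κ} (hY : Y ⊆ closure Q)
    (h : ∀ x ∈ Y, ∀ᶠ y in 𝓝[Q] x, F y = G x) : IsLocallyConstantOn G Y := by
  intro x hx
  filter_upwards [self_mem_nhdsWithin,
    mem_nhdsWithin_of_mem_nhds (eventually_nhds_nhdsWithin.2 (h x hx))] with z hz hzx
  have := mem_closure_iff_nhdsWithin_neBot.1 (hY hz)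
  obtain ⟨y, hyz, hyx⟩ := ((h z hz).and hzx).exists
  exact hyz.symm.trans hyx

open Classical in
lemma isLocallyConstantOn_piecewise {F G : E → κ} (hP : IsOpen P) (hN : IsOpen N)
    (hF : IsLocallyConstantOn F (X ∩ (P ∪ N))) (hG : IsLocallyConstantOn G (X \ (P ∪ N)))
    (hFP : ∀ x ∈ X \ (P ∪ N), ∀ᶠ y in 𝓝[X ∩ P] x, F y = G x)
    (hFN : ∀ x ∈ X \ (P ∪ N), ∀ᶠ y in 𝓝[X ∩ N] x, F y = G x) :
    IsLocallyConstantOn ((P ∪ N).piecewise F G) X := by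
  intro x hx
  by_cases hxPN : x ∈ P ∪ N
  · have hnhds : P ∪ N ∈ 𝓝[X] x :=
      mem_nhdsWithin_of_mem_nhds ((hP.union hN).mem_nhds hxPN)
    have hFx := hF x ⟨hx, hxPN⟩
    rw [inter_comm, nhdsWithin_inter_of_mem hnhds] at hFx
    filter_upwards [hnhds, hFx] with y hy hyx
    simpa [piecewise_eq_of_mem _ _ _ hy, piecewise_eq_of_mem _ _ _ hxPN] using hyx
  · have hcover : X = (X ∩ P ∪ X ∩ N) ∪ X \ (P ∪ N) := by
      rw [← inter_union_distrib_left, inter_union_sdiff]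
    have hxZ : x ∈ X \ (P ∪ N) := ⟨hx, hxPN⟩
    rw [piecewise_eq_of_notMem _ _ _ hxPN, hcover]
    simp only [nhdsWithin_union, Filter.eventually_sup]
    refine ⟨⟨?_, ?_⟩, ?_⟩
    · filter_upwards [self_mem_nhdsWithin, hFP x hxZ] with y hy hyx
      rwa [piecewise_eq_of_mem _ _ _ (mem_union_left N hy.2)]
    · filter_upwards [self_mem_nhdsWithin, hFN x hxZ] with y hy hyx
      rwa [piecewise_eq_of_mem _ _ _ (mem_union_right P hy.2)]
    · filter_upwards [self_mem_nhdsWithin, hG x hxZ] with y hy hyx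
      rwa [piecewise_eq_of_notMem _ _ _ hy.2]

lemma eventually_connectedComponentIn_eq {x : E} (hQX : Q ⊆ X) (hxQ : x ∈ Q) (hQ : Q ∈ 𝓝[X] x)
    (hx : ∃ U ∈ 𝓝 x, IsPreconnected (Q ∩ U)) :
    ∀ᶠ y in 𝓝[X] x, connectedComponentIn X y = connectedComponentIn X x := by
  obtain ⟨U, hU, hQU⟩ := hx
  filter_upwards [hQ, mem_nhdsWithin_of_mem_nhds hU] with y hyQ hyU
  exact connectedComponentIn_eq_of_isPreconnected hQU (inter_subset_left.trans hQX) ⟨hyQ, hyU⟩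
    ⟨hxQ, mem_of_mem_nhds hU⟩

lemma isLocallyConstantOn_connectedComponentIn (hP : IsOpen P) (hN : IsOpen N)
    (hPX : ∀ x ∈ X, ∃ U ∈ 𝓝 x, IsPreconnected (X ∩ P ∩ U))
    (hNX : ∀ x ∈ X, ∃ U ∈ 𝓝 x, IsPreconnected (X ∩ N ∩ U)) :
    IsLocallyConstantOn (connectedComponentIn (X ∩ (P ∪ N))) (X ∩ (P ∪ N)) := by
  rintro x ⟨hx, hxP | hxN⟩
  · refine eventually_connectedComponentIn_eq (inter_subset_inter_right X subset_union_left)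
      ⟨hx, hxP⟩ ?_ (hPX x hx)
    filter_upwards [self_mem_nhdsWithin, mem_nhdsWithin_of_mem_nhds (hP.mem_nhds hxP)]
      with y hy hyP using ⟨hy.1, hyP⟩
  · refine eventually_connectedComponentIn_eq (inter_subset_inter_right X subset_union_right)
      ⟨hx, hxN⟩ ?_ (hNX x hx)
    filter_upwards [self_mem_nhdsWithin, mem_nhdsWithin_of_mem_nhds (hN.mem_nhds hxN)]
      with y hy hyN using ⟨hy.1, hyN⟩

lemma encard_connComps_inter_union_le (hP : IsOpen P) (hN : IsOpen N)
    (hPX : ∀ x ∈ X, ∃ U ∈ 𝓝 x, IsPreconnected (X ∩ P ∩ U))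
    (hNX : ∀ x ∈ X, ∃ U ∈ 𝓝 x, IsPreconnected (X ∩ N ∩ U))
    (hPcl : X \ (P ∪ N) ⊆ closure (X ∩ P)) (hNcl : X \ (P ∪ N) ⊆ closure (X ∩ N)) :
    (connComps (X ∩ (P ∪ N))).encard
      ≤ (connComps X).encard + (connComps (X \ (P ∪ N))).encard := by
  classical
  set Y := X ∩ (P ∪ N)
  set Z := X \ (P ∪ N)
  have hPY : X ∩ P ⊆ Y := inter_subset_inter_right X subset_union_left
  have hNY : X ∩ N ⊆ Y := inter_subset_inter_right X subset_union_right
  choose! cP hcP using fun x (hx : x ∈ Z) =>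
    exists_eventually_connectedComponentIn_eq hPY (hPX x hx.1)
  choose! cN hcN using fun x (hx : x ∈ Z) =>
    exists_eventually_connectedComponentIn_eq hNY (hNX x hx.1)
  have hcP_const : IsLocallyConstantOn cP Z := isLocallyConstantOn_of_eventually_eq hPcl hcP
  have hcN_const : IsLocallyConstantOn cN Z := isLocallyConstantOn_of_eventually_eq hNcl hcN
  set R : Set (Set E × Set E) := (fun x => (cP x, cN x)) '' Z
  have hR : R.encard ≤ (connComps Z).encard := (hcP_const.prodMk hcN_const).encard_image_le
  rcases (connComps Z).finite_or_infinite with hfin | hinf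
  swap
  · simp [hinf.encard_eq]
  have hRfin : R.Finite := finite_of_encard_le_coe (hR.trans_eq hfin.cast_ncard_eq.symm)
  obtain ⟨f, hfR, hf⟩ := exists_map_identifying_pairs hRfin
  have hglue : ∀ x ∈ Z, f (cN x) = f (cP x) := fun x hx => (hfR _ (mem_image_of_mem _ hx)).symm
  have hF : IsLocallyConstantOn ((P ∪ N).piecewise (f ∘ connectedComponentIn Y) (f ∘ cP)) X :=
    isLocallyConstantOn_piecewise hP hN
      ((isLocallyConstantOn_connectedComponentIn hP hN hPX hNX).comp f) (hcP_const.comp f)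
      (fun x hx => (hcP x hx).mono fun _ hy => congrArg f hy)
      (fun x hx => (hcN x hx).mono fun _ hy => (congrArg f hy).trans (hglue x hx))
  have himage : f '' connComps Y
      ⊆ (P ∪ N).piecewise (f ∘ connectedComponentIn Y) (f ∘ cP) '' X := by
    rintro _ ⟨_, ⟨x, hx, rfl⟩, rfl⟩
    exact ⟨x, hx.1, piecewise_eq_of_mem _ _ _ hx.2⟩
  calc (connComps Y).encard ≤ (f '' connComps Y).encard + R.encard := hf _
    _ ≤ (connComps X).encard + (connComps Z).encard :=
      add_le_add ((encard_le_encard himage).trans hF.encard_image_le) hR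

end Topology

section Affine

lemma sign_mul_add_mul {R : Type*} [Ring R] [LinearOrder R] [IsStrictOrderedRing R]
    {p q a b : R} (ha : 0 < a) (hb : 0 < b)
    (h : SignType.sign p ≠ 0 → SignType.sign q = SignType.sign p) :
    SignType.sign (a * p + b * q) = SignType.sign q := by
  rcases lt_trichotomy p 0 with hp | rfl | hp
  · have hsign := h (sign_ne_zero.2 hp.ne)
    rw [sign_neg hp, sign_eq_neg_one_iff] at hsign
    rw [sign_neg hsign, sign_neg]
    exact add_neg (mul_neg_of_pos_of_neg ha hp) (mul_neg_of_pos_of_neg hb hsign)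
  · rw [mul_zero, zero_add, sign_mul, sign_pos hb, one_mul]
  · have hsign := h (sign_ne_zero.2 hp.ne')
    rw [sign_pos hp, sign_eq_one_iff] at hsign
    rw [sign_pos hsign, sign_pos]
    positivity

lemma exists_forall_dotProduct_eq {ι m K : Type*} [Field K] [Fintype m] {b : ι → m → K}
    (hb : LinearIndependent K b) (c : ι → K) : ∃ v, ∀ i, b i ⬝ᵥ v = c i := by
  classical
  obtain ⟨f, hf⟩ := LinearMap.exists_extend (Finsupp.linearCombination K c ∘ₗ hb.repr)
  refine ⟨(dotProductEquiv K m).symm f, fun i => ?_⟩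
  have hbi : b i ∈ Submodule.span K (range b) := Submodule.subset_span (mem_range_self i)
  calc b i ⬝ᵥ (dotProductEquiv K m).symm f
      = dotProductEquiv K m ((dotProductEquiv K m).symm f) (b i) := dotProduct_comm _ _
    _ = f (b i) := by rw [LinearEquiv.apply_symm_apply]
    _ = Finsupp.linearCombination K c (hb.repr ⟨b i, hbi⟩) := LinearMap.congr_fun hf ⟨b i, hbi⟩
    _ = c i := by
        rw [hb.repr_eq_single i ⟨b i, hbi⟩ rfl, Finsupp.linearCombination_single, one_smul]

lemma exists_mem_nhds_isPreconnected_inter {E : Type*} [SeminormedAddCommGroup E]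
    [NormedSpace ℝ E] {U K : Set E} (hU : IsOpen U) (hK : Convex ℝ K) {x : E} (hx : x ∈ U) :
    ∃ W ∈ 𝓝 x, IsPreconnected (U ∩ K ∩ W) := by
  obtain ⟨ε, hε, hball⟩ := Metric.isOpen_iff.1 hU x hx
  refine ⟨Metric.ball x ε, Metric.ball_mem_nhds x hε, ?_⟩
  rw [inter_right_comm, inter_eq_self_of_subset_right hball]
  exact ((convex_ball x ε).inter hK).isPreconnected

lemma left_mem_closure_openSegment {E : Type*} [AddCommGroup E] [Module ℝ E] [TopologicalSpace E]
    [ContinuousAdd E] [ContinuousSMul ℝ E] (x y : E) : x ∈ closure (openSegment ℝ x y) :=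
  segment_subset_closure_openSegment (left_mem_segment ℝ x y)

end Affine

namespace Arrangement

variable {d n : ℕ} (𝓗 : Arrangement d n)

/-- The flat `L_A`, the intersection of the hyperplanes with index in `A`. -/
def flat (A : Finset (Fin n)) : Set (Fin d → ℝ) := ⋂ i ∈ A, 𝓗.H i

/-- The affine form whose zero set is the `i`-th hyperplane. -/
def affineForm (i : Fin n) (x : Fin d → ℝ) : ℝ := 𝓗.normal i ⬝ᵥ x - 𝓗.offset i

/-- The sign vector (covector) of a point: its position relative to each hyperplane. -/
def signVector (x : Fin d → ℝ) (i : Fin n) : SignType := SignType.sign (𝓗.affineForm i x)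

/-- A set is a union of cells (relatively open faces) of the arrangement if membership in it
depends only on the sign vector. -/
def IsCellUnion (X : Set (Fin d → ℝ)) : Prop :=
  ∀ ⦃x y⦄, 𝓗.signVector x = 𝓗.signVector y → x ∈ X → y ∈ X

/-- The sets of indices in `I` whose flat meets `U`; the support of a set of chambers is the case
where `I` is everything and `U` is its thickening. -/
def supportOn (I : Finset (Fin n)) (U : Set (Fin d → ℝ)) : Set (Finset (Fin n)) :=
  {A | A ⊆ I ∧ (U ∩ 𝓗.flat A).Nonempty}

variable {𝓗} {i : Fin n} {x y z : Fin d → ℝ} {A I : Finset (Fin n)} {U : Set (Fin d → ℝ)}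
  {S : Set (Set (Fin d → ℝ))}

lemma H_eq : 𝓗.H i = {x | 𝓗.signVector x i = 0} := by
  ext x
  rw [mem_ofPred_eq, signVector, sign_eq_zero_iff, affineForm, sub_eq_zero]
  rfl

lemma pos_eq : 𝓗.pos i = {x | 𝓗.signVector x i = 1} := by
  ext x
  rw [mem_ofPred_eq, signVector, sign_eq_one_iff, affineForm, sub_pos]
  rfl

lemma neg_eq : 𝓗.neg i = {x | 𝓗.signVector x i = -1} := by
  ext x
  rw [mem_ofPred_eq, signVector, sign_eq_neg_one_iff, affineForm, sub_neg]
  rfl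

lemma mem_H_iff : x ∈ 𝓗.H i ↔ 𝓗.signVector x i = 0 := by
  rw [H_eq, mem_ofPred_eq]

lemma mem_free_iff : x ∈ 𝓗.free ↔ ∀ i, 𝓗.signVector x i ≠ 0 :=
  forall_congr' fun _ => mem_H_iff.not

lemma mem_flat_iff : x ∈ 𝓗.flat A ↔ ∀ i ∈ A, x ∈ 𝓗.H i :=
  mem_iInter₂

lemma disjoint_pos_neg : Disjoint (𝓗.pos i) (𝓗.neg i) :=
  disjoint_left.2 fun _ (hpos : 𝓗.offset i < _) hneg => lt_asymm hpos hneg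

lemma compl_pos_union_neg : (𝓗.pos i ∪ 𝓗.neg i)ᶜ = 𝓗.H i := by
  ext x
  simp only [pos, neg, H, mem_compl_iff, mem_union, mem_ofPred_eq, not_or, not_lt,
    le_antisymm_iff]

lemma flat_insert : 𝓗.flat (insert i A) = 𝓗.H i ∩ 𝓗.flat A :=
  Finset.set_biInter_insert i A 𝓗.H

lemma continuous_affineForm (i : Fin n) : Continuous (𝓗.affineForm i) := by
  unfold affineForm
  fun_prop

lemma isOpen_pos : IsOpen (𝓗.pos i) :=
  isOpen_lt continuous_const (by fun_prop)

lemma isOpen_neg : IsOpen (𝓗.neg i) :=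
  isOpen_lt (by fun_prop) continuous_const

lemma affineForm_combo (i : Fin n) (x y : Fin d → ℝ) {a b : ℝ} (hab : a + b = 1) :
    𝓗.affineForm i (a • x + b • y) = a * 𝓗.affineForm i x + b * 𝓗.affineForm i y := by
  simp only [affineForm, dotProduct_add, dotProduct_smul, smul_eq_mul]
  linear_combination 𝓗.offset i * hab

lemma signVector_apply_of_mem_openSegment (hz : z ∈ openSegment ℝ x y)
    (h : 𝓗.signVector x i ≠ 0 → 𝓗.signVector y i = 𝓗.signVector x i) :
    𝓗.signVector z i = 𝓗.signVector y i := by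
  obtain ⟨a, b, ha, hb, hab, rfl⟩ := hz
  rw [signVector, affineForm_combo i x y hab]
  exact sign_mul_add_mul ha hb h

lemma convex_setOf_signVector_apply_eq (i : Fin n) (s : SignType) :
    Convex ℝ {x | 𝓗.signVector x i = s} :=
  convex_iff_openSegment_subset.2 fun _ hx _ hy _ hz =>
    (signVector_apply_of_mem_openSegment hz fun _ => Eq.trans hy (Eq.symm hx)).trans hy

lemma convex_setOf_signVector_eq (σ : Fin n → SignType) : Convex ℝ {x | 𝓗.signVector x = σ} := by
  simp only [funext_iff, ofPred_forall]
  exact convex_iInter fun i => convex_setOf_signVector_apply_eq i (σ i)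

lemma convex_pos : Convex ℝ (𝓗.pos i) :=
  pos_eq ▸ convex_setOf_signVector_apply_eq i 1

lemma convex_neg : Convex ℝ (𝓗.neg i) :=
  neg_eq ▸ convex_setOf_signVector_apply_eq i (-1)

lemma convex_flat : Convex ℝ (𝓗.flat A) :=
  convex_iInter₂ fun i _ => H_eq ▸ convex_setOf_signVector_apply_eq i 0

lemma openSegment_subset_setOf_signVector_apply_eq (hx : x ∈ 𝓗.H i) :
    openSegment ℝ x y ⊆ {z | 𝓗.signVector z i = 𝓗.signVector y i} :=
  fun _ hz => signVector_apply_of_mem_openSegment hz fun h => absurd (mem_H_iff.1 hx) h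

lemma GeneralPosition.card_le (hgp : 𝓗.GeneralPosition) (hx : x ∈ 𝓗.flat A) : A.card ≤ d := by
  by_contra! hA
  obtain ⟨B, hBA, hB⟩ := Finset.exists_subset_card_eq (Nat.succ_le_of_lt hA)
  have hxB : x ∈ 𝓗.flat B := mem_flat_iff.2 fun i hi => mem_flat_iff.1 hx i (hBA hi)
  exact notMem_empty x (hgp.2 B hB ▸ hxB)

lemma GeneralPosition.exists_affineForm_eq (hgp : 𝓗.GeneralPosition) (hx : x ∈ 𝓗.flat A)
    (c : Fin n → ℝ) : ∃ y, ∀ i ∈ A, 𝓗.affineForm i y = c i := by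
  obtain ⟨y, hy⟩ := exists_forall_dotProduct_eq (hgp.1 A (hgp.card_le hx))
    fun i => c i + 𝓗.offset i
  exact ⟨y, fun i hi => by rw [affineForm, hy ⟨i, hi⟩, add_sub_cancel_right]⟩

lemma GeneralPosition.mem_closure_flat_inter (hgp : 𝓗.GeneralPosition) (hi : i ∉ A)
    (hx : x ∈ 𝓗.flat (insert i A)) {s : SignType} {c : ℝ} (hc : SignType.sign c = s) :
    x ∈ closure (𝓗.flat A ∩ {y | 𝓗.signVector y i = s}) := by
  obtain ⟨y, hy⟩ := hgp.exists_affineForm_eq hx (Function.update 0 i c)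
  have hyi : 𝓗.signVector y i = s := by
    rw [signVector, hy i (Finset.mem_insert_self i A), Function.update_self, hc]
  have hyA : y ∈ 𝓗.flat A := mem_flat_iff.2 fun j hj => by
    rw [mem_H_iff, signVector, hy j (Finset.mem_insert_of_mem hj),
      Function.update_of_ne (ne_of_mem_of_not_mem hj hi), Pi.zero_apply, sign_zero]
  rw [flat_insert] at hx
  refine closure_mono (subset_inter ?_ ?_) (left_mem_closure_openSegment x y)
  · exact convex_flat.openSegment_subset hx.2 hyA
  · exact hyi ▸ openSegment_subset_setOf_signVector_apply_eq hx.1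

lemma GeneralPosition.inter_flat_insert_subset_closure_pos (hgp : 𝓗.GeneralPosition)
    (hU : IsOpen U) (hi : i ∉ A) :
    U ∩ 𝓗.flat (insert i A) ⊆ closure (U ∩ 𝓗.flat A ∩ 𝓗.pos i) := by
  rintro x ⟨hxU, hx⟩
  have hcl := hgp.mem_closure_flat_inter hi hx sign_one
  rw [← pos_eq] at hcl
  exact inter_assoc U _ _ ▸ hU.inter_closure ⟨hxU, hcl⟩

lemma GeneralPosition.inter_flat_insert_subset_closure_neg (hgp : 𝓗.GeneralPosition)
    (hU : IsOpen U) (hi : i ∉ A) :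
    U ∩ 𝓗.flat (insert i A) ⊆ closure (U ∩ 𝓗.flat A ∩ 𝓗.neg i) := by
  rintro x ⟨hxU, hx⟩
  have hcl := hgp.mem_closure_flat_inter hi hx (sign_neg neg_one_lt_zero)
  rw [← neg_eq] at hcl
  exact inter_assoc U _ _ ▸ hU.inter_closure ⟨hxU, hcl⟩

lemma sdiff_biUnion_insert (U : Set (Fin d → ℝ)) :
    U \ ⋃ j ∈ insert i I, 𝓗.H j = (U ∩ (𝓗.pos i ∪ 𝓗.neg i)) \ ⋃ j ∈ I, 𝓗.H j := by
  rw [Finset.set_biUnion_insert, ← sdiff_sdiff, ← compl_pos_union_neg, sdiff_compl]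

lemma inter_flat_sdiff (U : Set (Fin d → ℝ)) :
    (U ∩ 𝓗.flat A) \ (𝓗.pos i ∪ 𝓗.neg i) = U ∩ 𝓗.flat (insert i A) := by
  rw [sdiff_eq, compl_pos_union_neg, flat_insert, inter_assoc, inter_comm (𝓗.flat A)]

lemma GeneralPosition.encard_connComps_inter_flat_le (hgp : 𝓗.GeneralPosition) (hU : IsOpen U)
    (hi : i ∉ A) :
    (connComps (U ∩ (𝓗.pos i ∪ 𝓗.neg i) ∩ 𝓗.flat A)).encard
      ≤ (connComps (U ∩ 𝓗.flat A)).encard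
        + (connComps (U ∩ 𝓗.flat (insert i A))).encard := by
  have hlocal : ∀ K, Convex ℝ K → ∀ x ∈ U ∩ 𝓗.flat A,
      ∃ W ∈ 𝓝 x, IsPreconnected (U ∩ 𝓗.flat A ∩ K ∩ W) := fun K hK x hx =>
    inter_assoc U _ K ▸ exists_mem_nhds_isPreconnected_inter hU (convex_flat.inter hK) hx.1
  have hpos := hgp.inter_flat_insert_subset_closure_pos hU hi
  have hneg := hgp.inter_flat_insert_subset_closure_neg hU hi
  rw [← inter_flat_sdiff] at hpos hneg ⊢
  rw [inter_right_comm]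
  exact encard_connComps_inter_union_le isOpen_pos isOpen_neg (hlocal _ convex_pos)
    (hlocal _ convex_neg) hpos hneg

theorem GeneralPosition.encard_connComps_sdiff_le (hgp : 𝓗.GeneralPosition) (hU : IsOpen U)
    (I : Finset (Fin n)) :
    (connComps (U \ ⋃ i ∈ I, 𝓗.H i)).encard
      ≤ ∑ A ∈ I.powerset, (connComps (U ∩ 𝓗.flat A)).encard := by
  induction I using Finset.induction_on generalizing U with
  | empty => simp [flat]
  | insert i I hi ih =>
    rw [sdiff_biUnion_insert, Finset.sum_powerset_insert hi, ← Finset.sum_add_distrib]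
    refine (ih (hU.inter (isOpen_pos.union isOpen_neg))).trans (Finset.sum_le_sum fun A hA => ?_)
    exact hgp.encard_connComps_inter_flat_le hU fun hiA => hi (Finset.mem_powerset.1 hA hiA)

lemma GeneralPosition.supportOn_insert_subset (hgp : 𝓗.GeneralPosition) (hU : IsOpen U)
    (hi : i ∉ I) :
    𝓗.supportOn (insert i I) U ⊆
      (𝓗.supportOn I (U ∩ 𝓗.pos i) ∪ 𝓗.supportOn I (U ∩ 𝓗.neg i)) ∪
        insert i '' (𝓗.supportOn I (U ∩ 𝓗.pos i) ∩ 𝓗.supportOn I (U ∩ 𝓗.neg i)) := by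
  have hmeet : ∀ A ⊆ I, (U ∩ 𝓗.flat (insert i A)).Nonempty →
      A ∈ 𝓗.supportOn I (U ∩ 𝓗.pos i) ∩ 𝓗.supportOn I (U ∩ 𝓗.neg i) := by
    rintro A hA ⟨x, hx⟩
    have hiA : i ∉ A := fun h => hi (hA h)
    have hpos := hgp.inter_flat_insert_subset_closure_pos hU hiA hx
    have hneg := hgp.inter_flat_insert_subset_closure_neg hU hiA hx
    rw [inter_right_comm] at hpos hneg
    exact ⟨⟨hA, closure_nonempty_iff.1 ⟨x, hpos⟩⟩, ⟨hA, closure_nonempty_iff.1 ⟨x, hneg⟩⟩⟩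
  rintro A ⟨hA, hne⟩
  by_cases hiA : i ∈ A
  · have hsub : A.erase i ⊆ I := Finset.subset_insert_iff.1 hA
    refine Or.inr ⟨A.erase i, hmeet _ hsub ?_, Finset.insert_erase hiA⟩
    rwa [Finset.insert_erase hiA]
  · have hsub : A ⊆ I := (Finset.subset_insert_iff_of_notMem hiA).1 hA
    obtain ⟨x, hxU, hxA⟩ := hne
    by_cases hxi : x ∈ 𝓗.pos i ∪ 𝓗.neg i
    · exact Or.inl (hxi.imp (fun h => ⟨hsub, x, ⟨hxU, h⟩, hxA⟩) fun h => ⟨hsub, x, ⟨hxU, h⟩, hxA⟩)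
    · rw [← mem_compl_iff, compl_pos_union_neg] at hxi
      exact Or.inl (Or.inl (hmeet A hsub ⟨x, hxU, flat_insert ▸ ⟨hxi, hxA⟩⟩).1)

theorem GeneralPosition.encard_supportOn_le (hgp : 𝓗.GeneralPosition) (hU : IsOpen U)
    (I : Finset (Fin n)) :
    (𝓗.supportOn I U).encard ≤ (connComps (U \ ⋃ i ∈ I, 𝓗.H i)).encard := by
  induction I using Finset.induction_on generalizing U with
  | empty =>
    rcases U.eq_empty_or_nonempty with rfl | hne
    · simp [supportOn]
    · have hsub : 𝓗.supportOn ∅ U ⊆ {∅} := fun A hA => Finset.subset_empty.1 hA.1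
      calc (𝓗.supportOn ∅ U).encard ≤ 1 := (encard_le_encard hsub).trans_eq (encard_singleton ∅)
        _ ≤ (connComps U).encard := one_le_encard_iff_nonempty.2 (connComps_nonempty_iff.2 hne)
        _ = (connComps (U \ ⋃ i ∈ (∅ : Finset (Fin n)), 𝓗.H i)).encard := by simp
  | insert i I hi ih =>
    set S₁ := 𝓗.supportOn I (U ∩ 𝓗.pos i)
    set S₂ := 𝓗.supportOn I (U ∩ 𝓗.neg i)
    set Y := (U ∩ (𝓗.pos i ∪ 𝓗.neg i)) \ ⋃ j ∈ I, 𝓗.H j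
    have hY : Y ⊆ 𝓗.pos i ∪ 𝓗.neg i := sdiff_subset.trans inter_subset_right
    have hYpos : Y ∩ 𝓗.pos i = (U ∩ 𝓗.pos i) \ ⋃ j ∈ I, 𝓗.H j := by
      grind
    have hYneg : Y ∩ 𝓗.neg i = (U ∩ 𝓗.neg i) \ ⋃ j ∈ I, 𝓗.H j := by
      grind
    calc (𝓗.supportOn (insert i I) U).encard
        ≤ ((S₁ ∪ S₂) ∪ insert i '' (S₁ ∩ S₂)).encard :=
          encard_le_encard (hgp.supportOn_insert_subset hU hi)
      _ ≤ (S₁ ∪ S₂).encard + (S₁ ∩ S₂).encard :=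
          (encard_union_le _ _).trans (add_le_add_right (encard_image_le _ _) _)
      _ = S₁.encard + S₂.encard := encard_union_add_encard_inter S₁ S₂
      _ ≤ (connComps (Y ∩ 𝓗.pos i)).encard + (connComps (Y ∩ 𝓗.neg i)).encard := by
          rw [hYpos, hYneg]
          exact add_le_add (ih (hU.inter isOpen_pos)) (ih (hU.inter isOpen_neg))
      _ ≤ (connComps Y).encard :=
          encard_connComps_add_encard_connComps_le isOpen_pos isOpen_neg disjoint_pos_neg hY
      _ = (connComps (U \ ⋃ j ∈ insert i I, 𝓗.H j)).encard := by rw [sdiff_biUnion_insert]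

lemma dense_compl_H (i : Fin n) : Dense (𝓗.H i)ᶜ := by
  intro x
  by_cases hx : x ∈ 𝓗.H i
  swap
  · exact subset_closure hx
  have hne : 𝓗.signVector (x + 𝓗.normal i) i ≠ 0 := by
    have hxi : 𝓗.normal i ⬝ᵥ x - 𝓗.offset i = 0 := sub_eq_zero.2 hx
    rw [signVector, sign_ne_zero, affineForm, dotProduct_add, add_sub_right_comm, hxi, zero_add]
    exact dotProduct_self_eq_zero.not.2 (𝓗.normal_ne i)
  refine closure_mono (fun z hz => ?_) (left_mem_closure_openSegment x (x + 𝓗.normal i))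
  rw [mem_compl_iff, mem_H_iff, openSegment_subset_setOf_signVector_apply_eq hx hz]
  exact hne

lemma free_eq : 𝓗.free = (⋃ i, 𝓗.H i)ᶜ := by
  ext x
  simp [free]

lemma isClosed_H (i : Fin n) : IsClosed (𝓗.H i) := by
  rw [← compl_pos_union_neg]
  exact (isOpen_pos.union isOpen_neg).isClosed_compl

lemma isOpen_free : IsOpen 𝓗.free := by
  rw [free_eq]
  exact (isClosed_iUnion_of_finite isClosed_H).isOpen_compl

lemma dense_free : Dense 𝓗.free := by
  rw [free_eq, compl_iUnion]
  exact dense_iInter_of_isOpen (fun i => (isClosed_H i).isOpen_compl) dense_compl_H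

lemma eventually_signVector_eq_of_ne_zero (x : Fin d → ℝ) :
    ∀ᶠ y in 𝓝 x, ∀ i, 𝓗.signVector x i ≠ 0 → 𝓗.signVector y i = 𝓗.signVector x i := by
  refine Filter.eventually_all.2 fun i => ?_
  by_cases hxi : 𝓗.affineForm i x = 0
  · exact Filter.Eventually.of_forall fun y h => absurd (sign_eq_zero_iff.2 hxi) h
  · have hcont : ContinuousAt (fun y => 𝓗.signVector y i) x :=
      (continuousAt_sign_of_ne_zero hxi).comp (continuous_affineForm i).continuousAt
    filter_upwards [hcont.preimage_mem_nhds (mem_nhds_discrete.2 (mem_singleton _))]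
      with y hy _ using hy

lemma IsCellUnion.inter {X Y : Set (Fin d → ℝ)} (hX : 𝓗.IsCellUnion X) (hY : 𝓗.IsCellUnion Y) :
    𝓗.IsCellUnion (X ∩ Y) :=
  fun _ _ hxy hx => ⟨hX hxy hx.1, hY hxy hx.2⟩

lemma isCellUnion_flat (A : Finset (Fin n)) : 𝓗.IsCellUnion (𝓗.flat A) := by
  intro x y hxy hx
  simp only [mem_flat_iff, mem_H_iff] at hx ⊢
  exact hxy ▸ hx

lemma isCellUnion_free : 𝓗.IsCellUnion 𝓗.free := by
  intro x y hxy hx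
  rw [mem_free_iff] at hx ⊢
  exact hxy ▸ hx

lemma IsCellUnion.connectedComponentIn_eq {X : Set (Fin d → ℝ)} (hX : 𝓗.IsCellUnion X)
    (hx : x ∈ X) (hxy : 𝓗.signVector x = 𝓗.signVector y) :
    connectedComponentIn X x = connectedComponentIn X y :=
  connectedComponentIn_eq_of_isPreconnected
    (convex_setOf_signVector_eq (𝓗.signVector x)).isPreconnected
    (fun _ hz => hX (Eq.symm hz) hx) rfl hxy.symm

lemma IsCellUnion.finite_connComps {X : Set (Fin d → ℝ)} (hX : 𝓗.IsCellUnion X) :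
    (connComps X).Finite := by
  rw [connComps_eq_image, ← encard_lt_top_iff]
  exact (encard_image_le_encard_image fun x hx y _ hxy =>
    hX.connectedComponentIn_eq hx hxy).trans_lt (toFinite (𝓗.signVector '' X)).encard_lt_top

lemma eq_connectedComponentIn_of_mem_chambers {C : Set (Fin d → ℝ)} (hC : C ∈ 𝓗.chambers)
    (hx : x ∈ C) : x ∈ 𝓗.free ∧ C = connectedComponentIn 𝓗.free x := by
  obtain ⟨y, _, rfl⟩ := hC
  exact ⟨connectedComponentIn_subset _ _ hx, connectedComponentIn_eq hx⟩

lemma isOpen_of_mem_chambers {C : Set (Fin d → ℝ)} (hC : C ∈ 𝓗.chambers) : IsOpen C := by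
  obtain ⟨x, _, rfl⟩ := hC
  exact isOpen_free.connectedComponentIn

lemma isPreconnected_of_mem_chambers {C : Set (Fin d → ℝ)} (hC : C ∈ 𝓗.chambers) :
    IsPreconnected C := by
  obtain ⟨x, _, rfl⟩ := hC
  exact isPreconnected_connectedComponentIn

lemma biUnion_subset_free (hS : S ⊆ 𝓗.chambers) : ⋃ C ∈ S, C ⊆ 𝓗.free :=
  iUnion₂_subset fun _ hC _ hx => (eq_connectedComponentIn_of_mem_chambers (hS hC) hx).1

lemma thickening_inter_free (hS : S ⊆ 𝓗.chambers) : thickening S ∩ 𝓗.free = ⋃ C ∈ S, C := by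
  refine Subset.antisymm ?_ (subset_inter (interior_maximal subset_closure ?_)
    (biUnion_subset_free hS))
  · rintro x ⟨hxT, hx⟩
    have hxC : x ∈ connectedComponentIn 𝓗.free x := mem_connectedComponentIn hx
    obtain ⟨y, hyC, hyS⟩ :=
      mem_closure_iff.1 (interior_subset hxT) _ isOpen_free.connectedComponentIn hxC
    obtain ⟨C, hC, hy⟩ := mem_iUnion₂.1 hyS
    refine mem_iUnion₂.2 ⟨C, hC, ?_⟩
    rwa [(eq_connectedComponentIn_of_mem_chambers (hS hC) hy).2, ← connectedComponentIn_eq hyC]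
  · exact isOpen_biUnion fun C hC => isOpen_of_mem_chambers (hS hC)

lemma isCellUnion_biUnion (hS : S ⊆ 𝓗.chambers) : 𝓗.IsCellUnion (⋃ C ∈ S, C) := by
  intro x y hxy hx
  obtain ⟨C, hC, hxC⟩ := mem_iUnion₂.1 hx
  obtain ⟨hxfree, hCx⟩ := eq_connectedComponentIn_of_mem_chambers (hS hC) hxC
  refine mem_iUnion₂.2 ⟨C, hC, ?_⟩
  rw [hCx, isCellUnion_free.connectedComponentIn_eq hxfree hxy]
  exact mem_connectedComponentIn (isCellUnion_free hxy hxfree)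

lemma connComps_biUnion (hS : S ⊆ 𝓗.chambers) : connComps (⋃ C ∈ S, C) = S := by
  have hcomp : ∀ C ∈ S, ∀ x ∈ C, connectedComponentIn (⋃ C ∈ S, C) x = C := by
    intro C hC x hx
    refine Subset.antisymm ?_ ((isPreconnected_of_mem_chambers (hS hC)).subset_connectedComponentIn
      hx (subset_biUnion_of_mem (u := id) hC))
    exact (connectedComponentIn_mono x (biUnion_subset_free hS)).trans_eq
      (eq_connectedComponentIn_of_mem_chambers (hS hC) hx).2.symm
  ext C
  constructor
  · rintro ⟨x, hx, rfl⟩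
    obtain ⟨C, hC, hxC⟩ := mem_iUnion₂.1 hx
    exact (hcomp C hC x hxC).symm ▸ hC
  · intro hC
    obtain ⟨x, hx, rfl⟩ := hS hC
    have hxC := mem_connectedComponentIn hx
    exact ⟨x, mem_biUnion hC hxC, (hcomp _ hC x hxC).symm⟩

lemma connComps_thickening_sdiff (hS : S ⊆ 𝓗.chambers) :
    connComps (thickening S \ ⋃ i ∈ (Finset.univ : Finset (Fin n)), 𝓗.H i) = S := by
  simp only [Finset.mem_univ, iUnion_true]
  rw [sdiff_eq, ← free_eq, thickening_inter_free hS, connComps_biUnion hS]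

/- A point `w` of a chamber near `y` has the sign vector of the points just off `x` in the direction
of `w`, so `w` lies in the thickening as soon as `x` does. -/
lemma isCellUnion_thickening (hS : S ⊆ 𝓗.chambers) : 𝓗.IsCellUnion (thickening S) := by
  intro x y hxy hx
  obtain ⟨W, hW, hWo, hyW⟩ := eventually_nhds_iff.1 (𝓗.eventually_signVector_eq_of_ne_zero y)
  have hWS : W ∩ 𝓗.free ⊆ ⋃ C ∈ S, C := by
    rintro w ⟨hwW, hwfree⟩
    obtain ⟨z, hzT, hz⟩ :=
      mem_closure_iff.1 (left_mem_closure_openSegment x w) _ isOpen_interior hx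
    have hzw : 𝓗.signVector z = 𝓗.signVector w := funext fun i =>
      signVector_apply_of_mem_openSegment hz fun h => by
        rw [hxy] at h ⊢
        exact hW w hwW i h
    have hzfree : z ∈ 𝓗.free := isCellUnion_free hzw.symm hwfree
    exact isCellUnion_biUnion hS hzw (thickening_inter_free hS ▸ ⟨hzT, hzfree⟩)
  exact interior_maximal
    ((dense_free.open_subset_closure_inter hWo).trans (closure_mono hWS)) hWo hyW

lemma isCellUnion_stratum (hS : S ⊆ 𝓗.chambers) (A : Finset (Fin n)) :
    𝓗.IsCellUnion (𝓗.stratum S A) :=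
  (isCellUnion_thickening hS).inter (isCellUnion_flat A)

lemma finite_of_subset_chambers (hS : S ⊆ 𝓗.chambers) : S.Finite :=
  connComps_biUnion hS ▸ (isCellUnion_biUnion hS).finite_connComps

lemma supp_eq_setOf_nonempty_connComps :
    𝓗.supp S = {A | (connComps (𝓗.stratum S A)).Nonempty} := by
  simp only [supp, connComps_nonempty_iff]

lemma supp_eq_supportOn_univ : 𝓗.supp S = 𝓗.supportOn Finset.univ (thickening S) := by
  simp [supp, supportOn, stratum, flat]

lemma GeneralPosition.encard_supp_le (hgp : 𝓗.GeneralPosition) (hS : S ⊆ 𝓗.chambers) :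
    (𝓗.supp S).encard ≤ S.encard := by
  rw [supp_eq_supportOn_univ]
  simpa only [connComps_thickening_sdiff hS] using
    hgp.encard_supportOn_le (U := thickening S) isOpen_interior Finset.univ

lemma GeneralPosition.encard_le_sum_encard_connComps_stratum (hgp : 𝓗.GeneralPosition)
    (hS : S ⊆ 𝓗.chambers) :
    S.encard ≤ ∑ A : Finset (Fin n), (connComps (𝓗.stratum S A)).encard := by
  simpa only [connComps_thickening_sdiff hS, Finset.powerset_univ, stratum, flat] using
    hgp.encard_connComps_sdiff_le (U := thickening S) isOpen_interior Finset.univ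

end Arrangement

/-- For a subset `S` of the chambers of an arrangement in general
position in `ℝ^d`, there is an injective map `μ` from `S` into the disjoint union
`⊔_{A ∈ supp S} conn(T_S(A))` hitting at least one component of every stratum;
consequently `|supp S| ≤ |S| ≤ ∑_A |conn(T_S(A))|`. -/
theorem stmt0 {d n : ℕ} (𝓗 : Arrangement d n) (hgp : 𝓗.GeneralPosition)
    (S : Set (Set (Fin d → ℝ))) (hS : S ⊆ 𝓗.chambers) :
    ∃ μ : S → Finset (Fin n) × Set (Fin d → ℝ),
      Function.Injective μ ∧
      (∀ C : S, (μ C).2 ∈ connComps (𝓗.stratum S (μ C).1)) ∧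
      (∀ A ∈ 𝓗.supp S, ∃ C : S, (μ C).1 = A) ∧
      (𝓗.supp S).ncard ≤ S.ncard ∧
      S.ncard ≤ ∑ A : Finset (Fin n), (connComps (𝓗.stratum S A)).ncard := by
  have hfin : S.Finite := Arrangement.finite_of_subset_chambers hS
  have hlower := hgp.encard_supp_le hS
  have hupper := hgp.encard_le_sum_encard_connComps_stratum hS
  obtain ⟨μ, hμ, hμcomp, hμsupp⟩ := exists_injective_forall_nonempty_exists_fst_eq
    (K := fun A => connComps (𝓗.stratum S A)) hfin
    (Arrangement.supp_eq_setOf_nonempty_connComps ▸ hlower) hupper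
  refine ⟨μ, hμ, hμcomp, fun A hA => hμsupp A (connComps_nonempty_iff.2 hA),
    ENat.toNat_le_toNat hlower hfin.encard_lt_top.ne, ?_⟩
  simp only [← hfin.cast_ncard_eq,
    ← (Arrangement.isCellUnion_stratum hS _).finite_connComps.cast_ncard_eq] at hupper
  exact_mod_cast hupper
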